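/- arXiv:2001.08031 — 4 statements merged into one kernel-verified Lean document; each statement's English description precedes it below -/
import Mathlib

section
/- In any deliberation space with n agents, every sequence D₀, D₁, …, D_k of deliberative coalition structures in which each consecutive pair (D_i, D_{i+1}) is a single-agent transition satisfies k ≤ n². In particular, any deliberation consisting of single-agent transitions terminates after at most n² transitions. -/
/-!
The potential is `Φ(D) = ∑ |C|²`, summed over the coalitions of `D`.  Moving an agent from a
coalition of size `a ≥ 1` to one of size `b ≥ a` changes it by
`(a - 1)² + (b + 1)² - a² - b² = 2 (b - a) + 2 ≥ 2`, so it strictly increases with every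
transition (`sqPotential_lt_of_transition`).  Since the sizes in a structure add up to `n = |V|`,
`Φ ≤ n²` (`sqPotential_le`), and a chain has at most `n²` transitions.
-/

/-!
Formalization of deliberative coalition formation (Elkind et al., "United for Change:
Deliberative Coalition Formation to Change the Status Quo").

Agents and proposals live in a metric space `M`; `V` is the finite set of agents,
`X ⊆ M` the set of proposals, `r ∈ X` the status quo.  A deliberative coalition
structure is a multiset of deliberative coalitions whose agent sets partition `V`
(empty coalitions are allowed).
-/

open scoped Classical
noncomputable section

variable {M : Type*}

/-- Agent `v` approves proposal `p` relative to status quo `r`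
if `v` is strictly closer to `p` than to `r`. -/
def Approves [MetricSpace M] (r v p : M) : Prop := dist v p < dist v r

/-- The set `C^p` of agents in `C` that approve proposal `p`. -/
def approvers [MetricSpace M] (r : M) (C : Finset M) (p : M) : Finset M :=
  C.filter fun v => Approves r v p

/-- `(C, p)` is a deliberative coalition: `C ⊆ V`, `p ∈ X`, and either `p = r` and no
agent of `C` approves any proposal in `X \ {r}`, or `p ≠ r` and every agent of `C`
approves `p`. -/
def IsCoalition [MetricSpace M] (V : Finset M) (X : Set M) (r : M)
    (C : Finset M) (p : M) : Prop :=
  C ⊆ V ∧ p ∈ X ∧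
    ((p = r ∧ ∀ v ∈ C, ∀ x ∈ X, x ≠ r → ¬ Approves r v x) ∨
     (p ≠ r ∧ ∀ v ∈ C, Approves r v p))

/-- `D` is a deliberative coalition structure: a (finite) multiset of deliberative
coalitions whose agent sets are pairwise disjoint with union `V` (equivalently, the
multiset sum of the agent sets is exactly `V`). Empty coalitions are allowed. -/
def IsStructure [MetricSpace M] (V : Finset M) (X : Set M) (r : M)
    (D : Multiset (Finset M × M)) : Prop :=
  (∀ c ∈ D, IsCoalition V X r c.1 c.2) ∧
    (D.map fun c => c.1.val).sum = V.val

/-- Single-agent transition: an agent `v` in a coalition `(C₁, p₁)` with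
`|C₂| ≥ |C₁| ≥ 1` moves to the coalition `(C₂, p₂)`; both the old and the new
collection of coalitions must be deliberative coalition structures. -/
def SingleAgentTransition [MetricSpace M] (V : Finset M) (X : Set M) (r : M)
    (D D' : Multiset (Finset M × M)) : Prop :=
  IsStructure V X r D ∧ IsStructure V X r D' ∧
  ∃ (C₁ C₂ : Finset M) (p₁ p₂ v : M) (D₀ : Multiset (Finset M × M)),
    v ∈ C₁ ∧ 1 ≤ C₁.card ∧ C₁.card ≤ C₂.card ∧
    D = (C₁, p₁) ::ₘ (C₂, p₂) ::ₘ D₀ ∧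
    D' = (C₁.erase v, p₁) ::ₘ (insert v C₂, p₂) ::ₘ D₀

/-- The sum of the squared coalition sizes. -/
def sqPotential (D : Multiset (Finset M × M)) : ℕ :=
  (D.map fun c => c.1.card ^ 2).sum

lemma IsStructure.sum_card [MetricSpace M] {V : Finset M} {X : Set M} {r : M}
    {D : Multiset (Finset M × M)} (h : IsStructure V X r D) :
    (D.map fun c => c.1.card).sum = V.card := by
  have := congrArg Multiset.cardHom h.2
  rw [map_multiset_sum, Multiset.map_map] at this
  exact this

lemma sqPotential_le_sq_sum (D : Multiset (Finset M × M)) :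
    sqPotential D ≤ (D.map fun c => c.1.card).sum ^ 2 := by
  unfold sqPotential
  induction D using Multiset.induction_on with
  | empty => simp
  | cons c D ih =>
    simp only [Multiset.map_cons, Multiset.sum_cons]
    nlinarith [Nat.zero_le (c.1.card * (D.map fun c => c.1.card).sum)]

lemma sqPotential_le [MetricSpace M] {V : Finset M} {X : Set M} {r : M}
    {D : Multiset (Finset M × M)} (h : IsStructure V X r D) :
    sqPotential D ≤ V.card ^ 2 :=
  h.sum_card ▸ sqPotential_le_sq_sum D

lemma sqPotential_lt_of_transition [MetricSpace M] {V : Finset M} {X : Set M} {r : M}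
    {D D' : Multiset (Finset M × M)} (h : SingleAgentTransition V X r D D') :
    sqPotential D < sqPotential D' := by
  obtain ⟨hD, hD', C₁, C₂, p₁, p₂, v, D₀, hv, -, hle, rfl, rfl⟩ := h
  have e := hD.sum_card
  have e' := hD'.sum_card
  have herase := Finset.card_erase_add_one hv
  simp only [Multiset.map_cons, Multiset.sum_cons] at e e'
  -- Both structures have total size `|V|`, which forces `v ∉ C₂`.
  have hinsert : (insert v C₂).card = C₂.card + 1 := by omega
  simp only [sqPotential, Multiset.map_cons, Multiset.sum_cons, hinsert]
  rw [← herase] at hle ⊢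
  nlinarith

/-- In any deliberation space with `n` agents, every sequence
`D₀, D₁, …, D_k` of deliberative coalition structures in which each consecutive pair
is a single-agent transition satisfies `k ≤ n²`. -/
theorem singleAgent_deliberation_length_le_sq [MetricSpace M]
    (V : Finset M) (X : Set M) (r : M) (hr : r ∈ X)
    (k : ℕ) (Ds : ℕ → Multiset (Finset M × M))
    (hchain : ∀ i < k, SingleAgentTransition V X r (Ds i) (Ds (i + 1))) :
    k ≤ V.card ^ 2 := by
  have hgrow : ∀ i ≤ k, i ≤ sqPotential (Ds i) := by
    intro i
    induction i with
    | zero => simp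
    | succ i ih =>
      intro hi
      have := sqPotential_lt_of_transition (hchain i hi)
      have := ih (by omega)
      omega
  rcases k with _ | k
  · simp
  · exact (hgrow _ le_rfl).trans (sqPotential_le (hchain k k.lt_succ_self).2.1)
end
end

section
/- If (D, D') is a single-agent transition between deliberative coalition structures, then λ(D') ≥ λ(D) + 2, where λ is the potential function that sums the squares of the coalition sizes. -/
/-!
Only the two coalitions involved in the move change size. Since the coalitions are disjoint, the
moving agent is not already in the target, so sizes `(s, t)` with `s ≤ t` become `(s - 1, t + 1)`,
and the sum of squares grows by `2 * (t - s) + 2 ≥ 2`.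
-/

/-!
Formalization of deliberative coalition formation (Elkind et al., "United for Change:
Deliberative Coalition Formation to Change the Status Quo").

Agents and proposals live in a metric space `M`; `V` is the finite set of agents,
`X ⊆ M` the set of proposals, `r ∈ X` the status quo.  A deliberative coalition
structure is a multiset of deliberative coalitions whose agent sets partition `V`
(empty coalitions are allowed).
-/

open scoped Classical
noncomputable section

variable {M : Type*}

/-- The potential of a coalition structure: the sum of the squares of the coalition
sizes. -/
def potential (D : Multiset (Finset M × M)) : ℕ :=
  (D.map fun c => c.1.card ^ 2).sum

/-- Every single-agent transition increases the potential
(the sum of squared coalition sizes) by at least 2. -/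
theorem singleAgent_potential_increase [MetricSpace M]
    (V : Finset M) (X : Set M) (r : M) (hr : r ∈ X)
    (D D' : Multiset (Finset M × M))
    (h : SingleAgentTransition V X r D D') :
    potential D + 2 ≤ potential D' := by
  obtain ⟨hD, -, C₁, C₂, p₁, p₂, v, D₀, hv, -, hle, rfl, rfl⟩ := h
  -- The agent sets sum to the duplicate-free multiset `V.val`, so `v ∈ C₁` excludes `v ∈ C₂`.
  have hv₂ : v ∉ C₂ := by
    intro hv'
    have hsum := hD.2
    simp only [Multiset.map_cons, Multiset.sum_cons] at hsum
    have hnd := V.nodup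
    rw [← hsum] at hnd
    exact Multiset.disjoint_left.mp (Multiset.nodup_add.mp hnd).2.2 hv
      (Multiset.mem_add.mpr (Or.inl hv'))
  have h₁ := Finset.card_erase_add_one hv
  simp only [potential, Multiset.map_cons, Multiset.sum_cons,
    Finset.card_insert_of_notMem hv₂]
  -- With `a = |C₁| - 1` and `b = |C₂| ≥ a + 1`, the gain is `2 * (b - a) ≥ 2`.
  rw [← h₁] at hle ⊢
  nlinarith
end
end

section
/- Consider a deliberation space with M = ℝ equipped with the metric ρ(x,y) = |x − y|, X, V ⊆ ℝ, and status quo r ∈ X, and assume at least one agent approves at least one proposal in X \ {r}. If a deliberative coalition structure D admits no follow transition, then D is successful, i.e., D contains a deliberative coalition (C, p) with p ≠ r and |C| = m*. In particular, every maximal run of follow transitions (or of follow and single-agent transitions) terminates in a successful coalition structure. -/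
/-!
On the real line an agent approves `p > r` iff it lies to the right of the midpoint `(p + r) / 2`,
and symmetrically for `p < r`. Hence an agent only approves proposals on one side of `r`, and for
two proposals on the same side the approval sets are nested (`approves_iff_of_gt`,
`approves_iff_of_lt`, `approves_nested`). If two distinct nonempty coalitions supported proposals
on the same side, one could follow the other (`follow_of_forall_approves`), so a terminal
structure has at most one nonempty coalition per side. Taking `p` with maximum support, the
coalition of any approver of `p` therefore contains all approvers of `p`, and so has size `m*`.
-/

/-!
Formalization of deliberative coalition formation (Elkind et al., "United for Change:
Deliberative Coalition Formation to Change the Status Quo").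

Agents and proposals live in a metric space `M`; `V` is the finite set of agents,
`X ⊆ M` the set of proposals, `r ∈ X` the status quo.  A deliberative coalition
structure is a multiset of deliberative coalitions whose agent sets partition `V`
(empty coalitions are allowed).
-/

open scoped Classical
noncomputable section

variable {M : Type*}

/-- Follow transition: a nonempty coalition `(C₁, p₁)` joins a nonempty coalition
`(C₂, p₂)` in supporting `p₂`. -/
def FollowTransition [MetricSpace M] (V : Finset M) (X : Set M) (r : M)
    (D D' : Multiset (Finset M × M)) : Prop :=
  IsStructure V X r D ∧ IsStructure V X r D' ∧
  ∃ (C₁ C₂ : Finset M) (p₁ p₂ : M) (D₀ : Multiset (Finset M × M)),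
    C₁.Nonempty ∧ C₂.Nonempty ∧
    D = (C₁, p₁) ::ₘ (C₂, p₂) ::ₘ D₀ ∧
    D' = (C₁ ∪ C₂, p₂) ::ₘ D₀

/-- The maximum support `m*`: the largest number of agents approving a single proposal
in `X \ {r}`. -/
def maxSupport [MetricSpace M] (V : Finset M) (X : Set M) (r : M) : ℕ :=
  sSup ((fun p => (approvers r V p).card) '' (X \ {r}))

/-- A coalition structure is successful if it contains a deliberative coalition
`(C, p)` with `p ≠ r` and `|C| = m*`. -/
def Successful [MetricSpace M] (V : Finset M) (X : Set M) (r : M)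
    (D : Multiset (Finset M × M)) : Prop :=
  ∃ c ∈ D, c.2 ≠ r ∧ c.1.card = maxSupport V X r

lemma approves_iff_of_gt {r v p : ℝ} (h : r < p) : Approves r v p ↔ (p + r) / 2 < v := by
  unfold Approves
  rw [Real.dist_eq, Real.dist_eq, ← sq_lt_sq]
  constructor <;> intro h' <;> nlinarith

lemma approves_iff_of_lt {r v p : ℝ} (h : p < r) : Approves r v p ↔ v < (p + r) / 2 := by
  unfold Approves
  rw [Real.dist_eq, Real.dist_eq, ← sq_lt_sq]
  constructor <;> intro h' <;> nlinarith

/-- An agent approving both `p` and `q` puts them on the same side of `r`. -/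
lemma same_side_of_approves {r v p q : ℝ} (hp : p ≠ r) (hq : q ≠ r)
    (h : Approves r v p) (h' : Approves r v q) : r < p ↔ r < q := by
  rcases hp.lt_or_gt with hp | hp <;> rcases hq.lt_or_gt with hq | hq <;>
    simp only [approves_iff_of_gt, approves_iff_of_lt, hp, hq] at h h' <;>
    constructor <;> intro _ <;> linarith

/-- Approval sets of proposals on the same side of `r` are nested. -/
lemma approves_nested {r p q : ℝ} (hp : p ≠ r) (hq : q ≠ r) (hpq : r < p ↔ r < q) :
    (∀ v, Approves r v p → Approves r v q) ∨ (∀ v, Approves r v q → Approves r v p) := by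
  rcases hp.lt_or_gt with hp | hp <;> rcases hq.lt_or_gt with hq | hq
  · simp only [approves_iff_of_lt, hp, hq]
    rcases le_total p q with h | h
    · left; intro v hv; linarith
    · right; intro v hv; linarith
  · exact absurd (hpq.2 hq) hp.not_gt
  · exact absurd (hpq.1 hp) hq.not_gt
  · simp only [approves_iff_of_gt, hp, hq]
    rcases le_total p q with h | h
    · right; intro v hv; linarith
    · left; intro v hv; linarith

/-- If every agent of a nonempty coalition `a` approves the proposal of a nonempty coalition `b`,
then `a` may follow `b`. -/
lemma follow_of_forall_approves {V : Finset ℝ} {X : Set ℝ} {r : ℝ}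
    {a b : Finset ℝ × ℝ} {D₀ : Multiset (Finset ℝ × ℝ)}
    (hD : IsStructure V X r (a ::ₘ b ::ₘ D₀)) (ha : a.1.Nonempty) (hb : b.1.Nonempty)
    (hbr : b.2 ≠ r) (h : ∀ v ∈ a.1, Approves r v b.2) :
    ∃ D', FollowTransition V X r (a ::ₘ b ::ₘ D₀) D' := by
  obtain ⟨hc, hs⟩ := id hD
  have hA := hc a (by simp)
  have hB := hc b (by simp)
  have hsum : a.1.val + (b.1.val + (D₀.map fun c => c.1.val).sum) = V.val := by simpa using hs
  have hdis : Disjoint a.1 b.1 := by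
    have hnd := V.nodup
    rw [← hsum, ← add_assoc] at hnd
    exact Finset.disjoint_val.1 (Multiset.nodup_add.1 (Multiset.nodup_add.1 hnd).1).2.2
  refine ⟨(a.1 ∪ b.1, b.2) ::ₘ D₀, hD, ⟨?_, ?_⟩, a.1, b.1, a.2, b.2, D₀, ha, hb, rfl, rfl⟩
  · intro c hcm
    rcases Multiset.mem_cons.1 hcm with rfl | hcm
    · refine ⟨Finset.union_subset hA.1 hB.1, hB.2.1, Or.inr ⟨hbr, fun v hv => ?_⟩⟩
      rcases Finset.mem_union.1 hv with hv | hv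
      · exact h v hv
      · exact (hB.2.2.resolve_left fun h' => hbr h'.1).2 v hv
    · exact hc c (by simp [hcm])
  · have hu : (a.1 ∪ b.1).val = a.1.val + b.1.val := by
      rw [← Finset.disjUnion_eq_union _ _ hdis]; rfl
    rw [Multiset.map_cons, Multiset.sum_cons, hu, add_assoc, hsum]

/-- An agent approving some proposal other than `r` belongs to a coalition supporting a proposal
other than `r`, which all members of the coalition approve. -/
lemma exists_coalition_of_approves {V : Finset ℝ} {X : Set ℝ} {r : ℝ}
    {D : Multiset (Finset ℝ × ℝ)} (hD : IsStructure V X r D) {v p : ℝ} (hv : v ∈ V)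
    (hp : p ∈ X) (hpr : p ≠ r) (hvp : Approves r v p) :
    ∃ c ∈ D, v ∈ c.1 ∧ c.2 ≠ r ∧ ∀ w ∈ c.1, Approves r w c.2 := by
  have hv' : v ∈ (D.map fun c => c.1.val).sum := by rw [hD.2]; exact hv
  obtain ⟨s, hs, hvs⟩ := Multiset.mem_join.1 hv'
  obtain ⟨c, hc, rfl⟩ := Multiset.mem_map.1 hs
  refine ⟨c, hc, hvs, (hD.1 c hc).2.2.resolve_left ?_⟩
  rintro ⟨-, h⟩
  exact h v hvs p hp hpr hvp

/-- In the one-dimensional Euclidean deliberation space (`M = ℝ` with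
`ρ(x,y) = |x − y|`), if some agent approves some proposal in `X \ {r}` and a
deliberative coalition structure `D` admits no follow transition, then `D` is
successful; in particular, every maximal run of follow (and single-agent) transitions
terminates in a successful coalition structure. -/
theorem follow_terminal_successful_1D
    (V : Finset ℝ) (X : Set ℝ) (r : ℝ) (hr : r ∈ X)
    (hex : ∃ v ∈ V, ∃ p ∈ X, p ≠ r ∧ Approves r v p)
    (D : Multiset (Finset ℝ × ℝ)) (hD : IsStructure V X r D)
    (hterm : ¬ ∃ D', FollowTransition V X r D D') :
    Successful V X r D := by
  obtain ⟨v₁, hv₁, p₁, hp₁, hp₁r, happ₁⟩ := hex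
  have hbdd : BddAbove ((fun p => (approvers r V p).card) '' (X \ {r})) := by
    refine ⟨V.card, ?_⟩
    rintro _ ⟨p, -, rfl⟩
    exact Finset.card_le_card (Finset.filter_subset _ _)
  have hle : ∀ p ∈ X, p ≠ r → (approvers r V p).card ≤ maxSupport V X r := fun p hp hpr =>
    le_csSup hbdd ⟨p, ⟨hp, hpr⟩, rfl⟩
  obtain ⟨p, ⟨hp, hpr : p ≠ r⟩, hmax⟩ :
      maxSupport V X r ∈ (fun p => (approvers r V p).card) '' (X \ {r}) :=
    Nat.sSup_mem ⟨_, p₁, ⟨hp₁, hp₁r⟩, rfl⟩ hbdd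
  have hpos : 0 < (approvers r V p).card := by
    have h1 : 0 < (approvers r V p₁).card :=
      Finset.card_pos.2 ⟨v₁, Finset.mem_filter.2 ⟨hv₁, happ₁⟩⟩
    exact h1.trans_le ((hle p₁ hp₁ hp₁r).trans_eq hmax.symm)
  obtain ⟨v, hv⟩ := Finset.card_pos.1 hpos
  obtain ⟨hvV, hvp⟩ := Finset.mem_filter.1 hv
  obtain ⟨c, hc, hvc, hcr, hcapp⟩ := exists_coalition_of_approves hD hvV hp hpr hvp
  refine ⟨c, hc, hcr, le_antisymm ?_ ?_⟩
  · refine le_trans (Finset.card_le_card fun w hw => ?_) (hle c.2 (hD.1 c hc).2.1 hcr)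
    exact Finset.mem_filter.2 ⟨(hD.1 c hc).1 hw, hcapp w hw⟩
  · rw [← hmax]
    refine Finset.card_le_card fun w hw => ?_
    obtain ⟨hwV, hwp⟩ := Finset.mem_filter.1 hw
    obtain ⟨d, hd, hwd, hdr, hdapp⟩ := exists_coalition_of_approves hD hwV hp hpr hwp
    by_cases hcd : d = c
    · exact hcd ▸ hwd
    exfalso
    obtain ⟨D₁, rfl⟩ := Multiset.exists_cons_of_mem hc
    obtain ⟨D₀, rfl⟩ := Multiset.exists_cons_of_mem ((Multiset.mem_cons.1 hd).resolve_left hcd)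
    have hside : r < c.2 ↔ r < d.2 :=
      (same_side_of_approves hcr hpr (hcapp v hvc) hvp).trans
        (same_side_of_approves hpr hdr hwp (hdapp w hwd))
    rcases approves_nested hcr hdr hside with h | h
    · exact hterm (follow_of_forall_approves hD ⟨v, hvc⟩ ⟨w, hwd⟩ hdr
        fun u hu => h u (hcapp u hu))
    · rw [Multiset.cons_swap] at hD hterm
      exact hterm (follow_of_forall_approves hD ⟨w, hwd⟩ ⟨v, hvc⟩ hcr
        fun u hu => h u (hdapp u hu))
end
end

section
/- In any deliberation space in which at least one agent approves at least one proposal in X \ {r}, the following holds: if a deliberative coalition structure D has exactly two coalitions whose supported proposal is different from r and D is not successful, then there exists a compromise transition from D. Consequently, any deliberation consisting of compromise transitions whose terminal coalition structure has exactly two coalitions not supporting r is successful. -/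
/-!
Since `m*` is a supremum of a nonempty set of naturals bounded by `|V|`, it is attained by some
proposal `p ∈ X \ {r}`. Agents in coalitions supporting `r` approve nothing in `X \ {r}`, so every
agent of `V` approving `p` lies in one of the two coalitions `C₁`, `C₂` not supporting `r`, that is
`C₁^p ∪ C₂^p = V^p`, a set of size `m*`. Each `Cᵢ` consists of approvers of its own proposal, so
`|Cᵢ| ≤ m*`, and the inequality is strict because `D` is not successful. Hence `C₁`, `C₂` and `p`
give a compromise transition.
-/

/-!
Formalization of deliberative coalition formation (Elkind et al., "United for Change:
Deliberative Coalition Formation to Change the Status Quo").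

Agents and proposals live in a metric space `M`; `V` is the finite set of agents,
`X ⊆ M` the set of proposals, `r ∈ X` the status quo.  A deliberative coalition
structure is a multiset of deliberative coalitions whose agent sets partition `V`
(empty coalitions are allowed).
-/

open scoped Classical
noncomputable section

variable {M : Type*}

/-- Compromise transition: the approvers of a proposal `p ∈ X` within two coalitions
`(C₁, p₁)` and `(C₂, p₂)` form a new coalition `(C₁^p ∪ C₂^p, p)` whose size exceeds
both `|C₁|` and `|C₂|`, leaving the dissenters `(C₁ \ C₁^p, p₁)` and `(C₂ \ C₂^p, p₂)`
behind. -/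
def CompromiseTransition [MetricSpace M] (V : Finset M) (X : Set M) (r : M)
    (D D' : Multiset (Finset M × M)) : Prop :=
  IsStructure V X r D ∧ IsStructure V X r D' ∧
  ∃ (C₁ C₂ : Finset M) (p₁ p₂ p : M) (D₀ : Multiset (Finset M × M)),
    p ∈ X ∧
    C₁.card < (approvers r C₁ p ∪ approvers r C₂ p).card ∧
    C₂.card < (approvers r C₁ p ∪ approvers r C₂ p).card ∧
    D = (C₁, p₁) ::ₘ (C₂, p₂) ::ₘ D₀ ∧
    D' = (approvers r C₁ p ∪ approvers r C₂ p, p) ::ₘ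
         (C₁ \ approvers r C₁ p, p₁) ::ₘ (C₂ \ approvers r C₂ p, p₂) ::ₘ D₀

section Helpers

variable [MetricSpace M] {V : Finset M} {X : Set M} {r : M}

theorem bddAbove_supports (V : Finset M) (X : Set M) (r : M) :
    BddAbove ((fun p => (approvers r V p).card) '' (X \ {r})) := by
  refine ⟨V.card, ?_⟩
  rintro _ ⟨p, -, rfl⟩
  exact Finset.card_le_card (Finset.filter_subset _ _)

theorem exists_card_approvers_eq_maxSupport (hne : (X \ {r}).Nonempty) :
    ∃ p ∈ X, p ≠ r ∧ (approvers r V p).card = maxSupport V X r := by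
  obtain ⟨p, ⟨hpX, hpr⟩, hp⟩ := Nat.sSup_mem (hne.image _) (bddAbove_supports V X r)
  exact ⟨p, hpX, hpr, hp⟩

theorem IsCoalition.card_le_maxSupport {C : Finset M} {p : M} (h : IsCoalition V X r C p)
    (hp : p ≠ r) : C.card ≤ maxSupport V X r := by
  obtain ⟨hCV, hpX, ⟨h', -⟩ | ⟨-, hC⟩⟩ := h
  · exact absurd h' hp
  · calc C.card ≤ (approvers r V p).card :=
          Finset.card_le_card fun v hv => Finset.mem_filter.2 ⟨hCV hv, hC v hv⟩
      _ ≤ maxSupport V X r := le_csSup (bddAbove_supports V X r) ⟨p, ⟨hpX, hp⟩, rfl⟩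

theorem IsCoalition.mono {C C' : Finset M} {p : M} (h : IsCoalition V X r C p)
    (hC : C' ⊆ C) : IsCoalition V X r C' p := by
  obtain ⟨hCV, hpX, ⟨hp, h⟩ | ⟨hp, h⟩⟩ := h
  · exact ⟨hC.trans hCV, hpX, .inl ⟨hp, fun v hv => h v (hC hv)⟩⟩
  · exact ⟨hC.trans hCV, hpX, .inr ⟨hp, fun v hv => h v (hC hv)⟩⟩

theorem approvers_val_add_sdiff_val (C : Finset M) (p : M) :
    (approvers r C p).val + (C \ approvers r C p).val = C.val := by
  rw [Finset.sdiff_val]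
  exact add_tsub_cancel_of_le (Finset.val_le_iff.2 (Finset.filter_subset _ _))

end Helpers

/-- In any deliberation space in which some agent approves some
proposal in `X \ {r}`: if a deliberative coalition structure `D` has exactly two
coalitions whose supported proposal differs from `r` and `D` is not successful, then
there is a compromise transition from `D`. Consequently, a deliberation of compromise
transitions whose terminal structure has exactly two coalitions not supporting `r`
is successful. -/
theorem compromise_from_two_nonstatusquo_coalitions [MetricSpace M]
    (V : Finset M) (X : Set M) (r : M) (hr : r ∈ X)
    (hex : ∃ v ∈ V, ∃ p ∈ X, p ≠ r ∧ Approves r v p)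
    (D : Multiset (Finset M × M)) (hD : IsStructure V X r D)
    (htwo : Multiset.card (D.filter fun c => c.2 ≠ r) = 2)
    (hns : ¬ Successful V X r D) :
    ∃ D', CompromiseTransition V X r D D' := by
  -- Split `D` into the two coalitions not supporting `r` and the rest.
  obtain ⟨⟨C₁, p₁⟩, ⟨C₂, p₂⟩, hpair⟩ := Multiset.card_eq_two.1 htwo
  set D₀ := D.filter fun c => ¬ c.2 ≠ r with hD₀
  have hDeq : D = (C₁, p₁) ::ₘ (C₂, p₂) ::ₘ D₀ := by
    conv_lhs => rw [← Multiset.filter_add_not (fun c : Finset M × M => c.2 ≠ r) D, hpair]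
    rw [Multiset.insert_eq_cons, Multiset.cons_add, Multiset.singleton_add, hD₀]
  have hp₁ : p₁ ≠ r :=
    (Multiset.mem_filter.1 (hpair ▸ by simp : (C₁, p₁) ∈ D.filter fun c => c.2 ≠ r)).2
  have hp₂ : p₂ ≠ r :=
    (Multiset.mem_filter.1 (hpair ▸ by simp : (C₂, p₂) ∈ D.filter fun c => c.2 ≠ r)).2
  have hD₀r : ∀ c ∈ D₀, c.2 = r := fun c hc => not_not.1 (Multiset.mem_filter.1 hc).2
  have hmem₁ : (C₁, p₁) ∈ D := by simp [hDeq]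
  have hmem₂ : (C₂, p₂) ∈ D := by rw [hDeq]; simp
  have hmem₀ : ∀ c ∈ D₀, c ∈ D := fun c hc => (Multiset.mem_filter.1 hc).1
  have hco₁ : IsCoalition V X r C₁ p₁ := hD.1 _ hmem₁
  have hco₂ : IsCoalition V X r C₂ p₂ := hD.1 _ hmem₂
  have hsum : C₁.val + (C₂.val + (D₀.map fun c => c.1.val).sum) = V.val := by
    have h := hD.2
    rw [hDeq] at h
    simpa only [Multiset.map_cons, Multiset.sum_cons] using h
  have hdisj : Disjoint C₁ C₂ := by
    have hnd := V.nodup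
    rw [← hsum, ← add_assoc] at hnd
    exact Finset.disjoint_val.1
      (Multiset.nodup_add.1 (Multiset.nodup_add.1 hnd).1).2.2
  obtain ⟨v₀, -, q, hqX, hqr, -⟩ := hex
  obtain ⟨p, hpX, hpr, hpm⟩ :=
    exists_card_approvers_eq_maxSupport (V := V) (X := X) (r := r) ⟨q, hqX, hqr⟩
  have hunion : approvers r C₁ p ∪ approvers r C₂ p = approvers r V p := by
    ext v
    simp only [approvers, Finset.mem_union, Finset.mem_filter]
    constructor
    · rintro (⟨hv, ha⟩ | ⟨hv, ha⟩)
      exacts [⟨hco₁.1 hv, ha⟩, ⟨hco₂.1 hv, ha⟩]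
    · rintro ⟨hv, ha⟩
      rw [← Finset.mem_val, ← hsum, Multiset.mem_add, Multiset.mem_add] at hv
      rcases hv with hv | hv | hv
      · exact .inl ⟨hv, ha⟩
      · exact .inr ⟨hv, ha⟩
      · obtain ⟨s, hs, hvs⟩ := Multiset.mem_join.1 hv
        obtain ⟨c, hc, rfl⟩ := Multiset.mem_map.1 hs
        rcases (hD.1 c (hmem₀ c hc)).2.2 with ⟨-, h⟩ | ⟨h, -⟩
        · exact absurd ha (h v hvs p hpX hpr)
        · exact absurd (hD₀r c hc) h
  have hlt₁ : C₁.card < maxSupport V X r :=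
    (hco₁.card_le_maxSupport hp₁).lt_of_ne fun h => hns ⟨_, hmem₁, hp₁, h⟩
  have hlt₂ : C₂.card < maxSupport V X r :=
    (hco₂.card_le_maxSupport hp₂).lt_of_ne fun h => hns ⟨_, hmem₂, hp₂, h⟩
  refine ⟨_, hD, ⟨?_, ?_⟩, C₁, C₂, p₁, p₂, p, D₀, hpX, ?_, ?_, hDeq, rfl⟩
  · intro c hc
    simp only [Multiset.mem_cons] at hc
    rcases hc with rfl | rfl | rfl | hc
    · rw [hunion]
      exact ⟨Finset.filter_subset _ _, hpX, .inr ⟨hpr, fun v hv => (Finset.mem_filter.1 hv).2⟩⟩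
    · exact hco₁.mono Finset.sdiff_subset
    · exact hco₂.mono Finset.sdiff_subset
    · exact hD.1 c (hmem₀ c hc)
  · have hdisj' : Disjoint (approvers r C₁ p) (approvers r C₂ p) :=
      hdisj.mono (Finset.filter_subset _ _) (Finset.filter_subset _ _)
    have hval : (approvers r C₁ p ∪ approvers r C₂ p).val =
        (approvers r C₁ p).val + (approvers r C₂ p).val := by
      rw [← Finset.disjUnion_eq_union _ _ hdisj', Finset.disjUnion_val]
    simp only [Multiset.map_cons, Multiset.sum_cons]
    rw [hval, ← hsum, ← approvers_val_add_sdiff_val (r := r) C₁ p,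
      ← approvers_val_add_sdiff_val (r := r) C₂ p]
    abel
  · rwa [hunion, hpm]
  · rwa [hunion, hpm]
end
end
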